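/- Let α > 0, β > 0, γ > 0, λ ∈ ℝ, and let s > 0 be a real number with |λ| < s^α. Then ∫₀^∞ e^{−st} · (∑_{k=0}^∞ (Γ(γ+k)/(Γ(γ) · k!)) · k · λ^k · t^{αk+β−1} · (ln t − ψ(αk+β)) / Γ(αk+β)) dt = − γ · λ · s^{αγ−β} · ln s / (s^α − λ)^{γ+1}. (The integrand series is the term-by-term derivative with respect to α of t^{β−1} E^γ_{α,β}(λ t^α).) -/

import Mathlib

open Real MeasureTheory

/-- The digamma function `ψ(x) = the logarithmic derivative of Γ`, i.e. the derivative of `log ∘ Γ`. -/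
noncomputable def digamma (x : ℝ) : ℝ := deriv (fun y : ℝ => Real.log (Real.Gamma y)) x

/-!
Differentiating `∫₀^∞ e^{-st} t^{a-1} / Γ(a) dt = s^{-a}` in `a` gives the Laplace transform of
each term of the series, namely `-s^{-a} log s`, and the binomial series sums these values. For
the exchange of sum and integral one needs an `L¹` bound on the derivative of the kernel that is
uniform for `a` bounded away from `0`. If `T` has the Gamma distribution with shape `a` and rate
`s`, then `Y = log (sT) - ψ(a)` is centred, so `E|Y| = 2 E[Y⁺]` and only an upper bound on `Y`
matters; log-convexity of `Γ` gives `log a ≤ ψ(a) + 1/a`, hence `Y ≤ (sT + 1) / a`, which has mean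
`1 + 1/a`.
-/

section Digamma

variable {a : ℝ}

lemma ne_neg_natCast_of_pos (ha : 0 < a) (m : ℕ) : a ≠ -m :=
  ((neg_nonpos.2 m.cast_nonneg).trans_lt ha).ne'

lemma differentiableAt_log_Gamma (ha : ∀ m : ℕ, a ≠ -m) :
    DifferentiableAt ℝ (fun x => log (Gamma x)) a :=
  (differentiableAt_Gamma ha).log (Gamma_ne_zero ha)

lemma hasDerivAt_Gamma_digamma (ha : ∀ m : ℕ, a ≠ -m) :
    HasDerivAt Gamma (digamma a * Gamma a) a := by
  convert! (differentiableAt_Gamma ha).hasDerivAt using 1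
  rw [digamma, deriv.log (differentiableAt_Gamma ha) (Gamma_ne_zero ha),
    div_mul_cancel₀ _ (Gamma_ne_zero ha)]

lemma log_Gamma_add_one (ha : ∀ m : ℕ, a ≠ -m) :
    log (Gamma (a + 1)) = log a + log (Gamma a) := by
  have ha₀ : a ≠ 0 := by simpa using ha 0
  rw [Gamma_add_one ha₀, log_mul ha₀ (Gamma_ne_zero ha)]

lemma digamma_add_one (ha : ∀ m : ℕ, a ≠ -m) : digamma (a + 1) = digamma a + a⁻¹ := by
  have ha₀ : a ≠ 0 := by simpa using ha 0
  have ha₁ (m : ℕ) : a + 1 ≠ -m := fun h => ha (m + 1) (by push_cast; linarith)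
  have hshift := (hasDerivAt_Gamma_digamma ha₁).comp_add_const a 1
  have hmul := (hasDerivAt_id a).mul (hasDerivAt_Gamma_digamma ha)
  have hrec : (fun x => Gamma (x + 1)) =ᶠ[nhds a] id * Gamma := by
    filter_upwards [eventually_ne_nhds ha₀] with x hx using Gamma_add_one hx
  have heq := hshift.unique (hmul.congr_of_eventuallyEq hrec)
  rw [Gamma_add_one ha₀] at heq
  have hΓ := Gamma_ne_zero ha
  simp only [id] at heq
  refine mul_right_cancel₀ (mul_ne_zero ha₀ hΓ) ?_
  linear_combination heq - Gamma a * mul_inv_cancel₀ ha₀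

lemma log_le_digamma_add_one (ha : 0 < a) : log a ≤ digamma (a + 1) := by
  have ha₁ : 0 < a + 1 := by positivity
  calc log a = slope (log ∘ Gamma) a (a + 1) := by
        simp [slope_def_field, log_Gamma_add_one (ne_neg_natCast_of_pos ha)]
    _ ≤ digamma (a + 1) := convexOn_log_Gamma.slope_le_deriv ha ha₁ (lt_add_one a)
        (differentiableAt_log_Gamma (ne_neg_natCast_of_pos ha₁))

lemma abs_log_sub_digamma_le {x : ℝ} (ha : 0 < a) (hx : 0 < x) :
    |log x - digamma a| ≤ 2 * ((x + 1) / a) - (log x - digamma a) := by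
  have hdigamma : log a ≤ digamma a + a⁻¹ :=
    digamma_add_one (ne_neg_natCast_of_pos ha) ▸ log_le_digamma_add_one ha
  have hlog : log x - log a ≤ x / a - 1 := by
    rw [← log_div hx.ne' ha.ne']
    exact log_le_sub_one_of_pos (div_pos hx ha)
  have hupper : log x - digamma a ≤ (x + 1) / a := by
    rw [add_div, one_div]
    linarith
  have hpos : 0 ≤ (x + 1) / a := by positivity
  rw [abs_le]
  constructor <;> linarith

end Digamma

section Mellin

open Asymptotics Filter Topology

variable (f : ℝ → ℝ) (a : ℝ)

lemma cpow_smul_ofReal_eqOn_Ioi :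
    Set.EqOn (fun t : ℝ => (t : ℂ) ^ ((a : ℂ) - 1) • (f t : ℂ))
      (fun t => ((t ^ (a - 1) * f t : ℝ) : ℂ)) (Set.Ioi 0) := by
  intro t ht
  simp [Complex.ofReal_cpow (le_of_lt ht)]

lemma mellin_ofReal :
    mellin (fun t => (f t : ℂ)) a = ((∫ t in Set.Ioi (0 : ℝ), t ^ (a - 1) * f t : ℝ) : ℂ) := by
  rw [mellin, setIntegral_congr_fun measurableSet_Ioi (cpow_smul_ofReal_eqOn_Ioi f a)]
  exact integral_ofReal

lemma mellinConvergent_ofReal_iff :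
    MellinConvergent (fun t => (f t : ℂ)) a ↔
      IntegrableOn (fun t => t ^ (a - 1) * f t) (Set.Ioi 0) := by
  rw [MellinConvergent,
    integrableOn_congr_fun (cpow_smul_ofReal_eqOn_Ioi f a) measurableSet_Ioi]
  exact ⟨fun h => h.re, fun h => h.ofReal⟩

variable {f a}

lemma hasDerivAt_integral_rpow_mul_of_isBigO {u v : ℝ}
    (hf : LocallyIntegrableOn f (Set.Ioi 0)) (htop : f =O[atTop] fun t => t ^ (-u)) (hu : a < u)
    (hbot : f =O[𝓝[>] 0] fun t => t ^ (-v)) (hv : v < a) :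
    IntegrableOn (fun t => t ^ (a - 1) * (log t * f t)) (Set.Ioi 0) ∧
      HasDerivAt (fun x => ∫ t in Set.Ioi (0 : ℝ), t ^ (x - 1) * f t)
        (∫ t in Set.Ioi (0 : ℝ), t ^ (a - 1) * (log t * f t)) a := by
  have hlog : (fun t => log t • (f t : ℂ)) = fun t => ((log t * f t : ℝ) : ℂ) := by
    funext t
    simp
  have hf_ofReal : LocallyIntegrableOn (fun t => (f t : ℂ)) (Set.Ioi 0) := fun t ht =>
    let ⟨U, hU, hfU⟩ := hf t ht
    ⟨U, hU, hfU.ofReal⟩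
  obtain ⟨hconv, hderiv⟩ := mellin_hasDerivAt_of_isBigO_rpow (s := a) hf_ofReal
    (Complex.isBigO_ofReal_left.2 htop) (by simpa using hu) (Complex.isBigO_ofReal_left.2 hbot)
    (by simpa using hv)
  rw [hlog] at hconv hderiv
  refine ⟨(mellinConvergent_ofReal_iff _ _).1 hconv, ?_⟩
  simpa only [mellin_ofReal, Complex.ofReal_re] using hderiv.real_of_complex

end Mellin

section Laplace

variable {a s : ℝ}

lemma integrableOn_rpow_mul_exp_neg_mul_Ioi (ha : 0 < a) (hs : 0 < s) :
    IntegrableOn (fun t : ℝ => t ^ (a - 1) * exp (-(s * t))) (Set.Ioi 0) := by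
  simpa using integrableOn_rpow_mul_exp_neg_mul_rpow (s := a - 1) (by linarith) one_pos hs

lemma integral_rpow_mul_exp_neg_mul_Ioi_eq_rpow_neg (ha : 0 < a) (hs : 0 < s) :
    ∫ t in Set.Ioi (0 : ℝ), t ^ (a - 1) * exp (-(s * t)) = s ^ (-a) * Gamma a := by
  rw [integral_rpow_mul_exp_neg_mul_Ioi ha hs, one_div, inv_rpow hs.le, rpow_neg hs.le]

lemma hasDerivAt_integral_rpow_mul_exp_neg_mul_Ioi (ha : 0 < a) (hs : 0 < s) :
    IntegrableOn (fun t : ℝ => t ^ (a - 1) * (log t * exp (-(s * t)))) (Set.Ioi 0) ∧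
      HasDerivAt (fun x => ∫ t in Set.Ioi (0 : ℝ), t ^ (x - 1) * exp (-(s * t)))
        (∫ t in Set.Ioi (0 : ℝ), t ^ (a - 1) * (log t * exp (-(s * t)))) a := by
  have hcont : Continuous fun t : ℝ => exp (-(s * t)) := by fun_prop
  refine hasDerivAt_integral_rpow_mul_of_isBigO (u := a + 1) (v := 0)
    (hcont.continuousOn.locallyIntegrableOn measurableSet_Ioi) ?_ (lt_add_one a) ?_ ha
  · simpa only [neg_mul] using (isLittleO_exp_neg_mul_rpow_atTop hs _).isBigO
  · simpa using (hcont.tendsto 0).mono_left nhdsWithin_le_nhds |>.isBigO_one ℝ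

lemma integral_rpow_mul_log_mul_exp_neg_mul_Ioi (ha : 0 < a) (hs : 0 < s) :
    ∫ t in Set.Ioi (0 : ℝ), t ^ (a - 1) * (log t * exp (-(s * t))) =
      s ^ (-a) * Gamma a * (digamma a - log s) := by
  have hpow : HasDerivAt (fun x => s ^ (-x)) (-(s ^ (-a) * log s)) a := by
    convert! (hasDerivAt_neg a).const_rpow hs using 1
    ring
  have hprod := hpow.mul (hasDerivAt_Gamma_digamma (ne_neg_natCast_of_pos ha))
  have hcongr : (fun x => ∫ t in Set.Ioi (0 : ℝ), t ^ (x - 1) * exp (-(s * t))) =ᶠ[nhds a]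
      fun x => s ^ (-x) * Gamma x := by
    filter_upwards [lt_mem_nhds ha] with x hx
    exact integral_rpow_mul_exp_neg_mul_Ioi_eq_rpow_neg hx hs
  have hderiv := (hasDerivAt_integral_rpow_mul_exp_neg_mul_Ioi ha hs).2
  rw [(hderiv.congr_of_eventuallyEq hcongr.symm).unique hprod]
  ring

/-- The derivative in `a` of the kernel `t ^ (a - 1) / Γ(a)` of the Riemann–Liouville integral of
order `a`, whose Laplace transform is `s ^ (-a)`. -/
noncomputable def rpowDivGammaDeriv (a t : ℝ) : ℝ :=
  t ^ (a - 1) * (log t - digamma a) / Gamma a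

lemma exp_mul_rpowDivGammaDeriv (s a : ℝ) :
    (fun t => exp (-(s * t)) * rpowDivGammaDeriv a t) = fun t => (Gamma a)⁻¹ *
      (t ^ (a - 1) * (log t * exp (-(s * t))) - digamma a * (t ^ (a - 1) * exp (-(s * t)))) := by
  funext t
  rw [rpowDivGammaDeriv]
  ring

lemma integrableOn_exp_mul_rpowDivGammaDeriv (ha : 0 < a) (hs : 0 < s) :
    IntegrableOn (fun t => exp (-(s * t)) * rpowDivGammaDeriv a t) (Set.Ioi 0) := by
  rw [exp_mul_rpowDivGammaDeriv]
  exact ((hasDerivAt_integral_rpow_mul_exp_neg_mul_Ioi ha hs).1.sub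
    ((integrableOn_rpow_mul_exp_neg_mul_Ioi ha hs).const_mul _)).const_mul _

lemma integral_exp_mul_rpowDivGammaDeriv (ha : 0 < a) (hs : 0 < s) :
    ∫ t in Set.Ioi (0 : ℝ), exp (-(s * t)) * rpowDivGammaDeriv a t = -(s ^ (-a) * log s) := by
  have hΓ := (Gamma_pos_of_pos ha).ne'
  rw [exp_mul_rpowDivGammaDeriv, integral_const_mul,
    integral_sub (hasDerivAt_integral_rpow_mul_exp_neg_mul_Ioi ha hs).1
      ((integrableOn_rpow_mul_exp_neg_mul_Ioi ha hs).const_mul _),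
    integral_const_mul, integral_rpow_mul_log_mul_exp_neg_mul_Ioi ha hs,
    integral_rpow_mul_exp_neg_mul_Ioi_eq_rpow_neg ha hs]
  field_simp
  ring

lemma abs_rpowDivGammaDeriv_le {t : ℝ} (ha : 0 < a) (hs : 0 < s) (ht : 0 < t) :
    |rpowDivGammaDeriv a t| ≤
      (|log s| - log s + 2 / a) / Gamma a * t ^ (a - 1) + 2 * s / Gamma (a + 1) * t ^ a
        - rpowDivGammaDeriv a t := by
  have hfactor : 0 ≤ t ^ (a - 1) / Gamma a :=
    div_nonneg (rpow_nonneg ht.le _) (Gamma_pos_of_pos ha).le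
  have hlog : |log t - digamma a| ≤
      |log s| - log s + 2 * ((s * t + 1) / a) - (log t - digamma a) := by
    have h := abs_log_sub_digamma_le ha (mul_pos hs ht)
    rw [log_mul hs.ne' ht.ne'] at h
    have htri := abs_sub (log s + log t - digamma a) (log s)
    rw [show log s + log t - digamma a - log s = log t - digamma a by ring] at htri
    linarith
  calc |rpowDivGammaDeriv a t| = t ^ (a - 1) / Gamma a * |log t - digamma a| := by
        rw [← abs_of_nonneg hfactor, ← abs_mul, rpowDivGammaDeriv]
        ring_nf
    _ ≤ t ^ (a - 1) / Gamma a *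
          (|log s| - log s + 2 * ((s * t + 1) / a) - (log t - digamma a)) := by gcongr
    _ = _ := by
        rw [rpowDivGammaDeriv, Gamma_add_one ha.ne', rpow_sub_one ht.ne']
        field_simp
        ring

lemma integral_norm_exp_mul_rpowDivGammaDeriv_le (ha : 0 < a) (hs : 0 < s) :
    ∫ t in Set.Ioi (0 : ℝ), ‖exp (-(s * t)) * rpowDivGammaDeriv a t‖ ≤
      (|log s| + 2 / a + 2) * s ^ (-a) := by
  have hD := integrableOn_exp_mul_rpowDivGammaDeriv ha hs
  have hpow := (integrableOn_rpow_mul_exp_neg_mul_Ioi ha hs).const_mul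
    ((|log s| - log s + 2 / a) / Gamma a)
  have hpow_succ := (integrableOn_rpow_mul_exp_neg_mul_Ioi (add_pos ha one_pos) hs).const_mul
    (2 * s / Gamma (a + 1))
  have hΓ := (Gamma_pos_of_pos ha).ne'
  have hΓ_succ := (Gamma_pos_of_pos (add_pos ha one_pos)).ne'
  calc ∫ t in Set.Ioi (0 : ℝ), ‖exp (-(s * t)) * rpowDivGammaDeriv a t‖
      ≤ ∫ t in Set.Ioi (0 : ℝ),
          ((|log s| - log s + 2 / a) / Gamma a * (t ^ (a - 1) * exp (-(s * t))) +
            2 * s / Gamma (a + 1) * (t ^ (a + 1 - 1) * exp (-(s * t))) -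
            exp (-(s * t)) * rpowDivGammaDeriv a t) := by
        refine setIntegral_mono_on hD.norm ((hpow.add hpow_succ).sub hD) measurableSet_Ioi
          fun t ht => ?_
        rw [norm_mul, norm_of_nonneg (exp_pos _).le, norm_eq_abs, add_sub_cancel_right]
        refine (mul_le_mul_of_nonneg_left (abs_rpowDivGammaDeriv_le ha hs ht)
          (exp_pos _).le).trans_eq ?_
        ring
    _ = (|log s| - log s + 2 / a) * s ^ (-a) + 2 * (s * s ^ (-(a + 1))) + s ^ (-a) * log s := by
        rw [integral_sub (by exact hpow.add hpow_succ) hD, integral_add hpow hpow_succ,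
          integral_const_mul, integral_const_mul,
          integral_rpow_mul_exp_neg_mul_Ioi_eq_rpow_neg ha hs,
          integral_rpow_mul_exp_neg_mul_Ioi_eq_rpow_neg (add_pos ha one_pos) hs,
          integral_exp_mul_rpowDivGammaDeriv ha hs]
        field_simp
        ring
    _ = (|log s| + 2 / a + 2) * s ^ (-a) := by
        rw [neg_add, ← sub_eq_add_neg, rpow_sub_one hs.ne', mul_div_cancel₀ _ hs.ne']
        ring

lemma integral_exp_mul_tsum_rpowDivGammaDeriv {ι : Type*} [Countable ι] {c a : ι → ℝ} {δ : ℝ}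
    (hδ : 0 < δ) (ha : ∀ i, c i ≠ 0 → δ ≤ a i) (hs : 0 < s)
    (hc : Summable fun i => c i * s ^ (-a i)) :
    ∫ t in Set.Ioi (0 : ℝ), exp (-(s * t)) * ∑' i, c i * rpowDivGammaDeriv (a i) t =
      -(log s * ∑' i, c i * s ^ (-a i)) := by
  set F : ι → ℝ → ℝ := fun i t => c i * (exp (-(s * t)) * rpowDivGammaDeriv (a i) t) with hF
  have hint (i : ι) : IntegrableOn (F i) (Set.Ioi 0) := by
    rcases eq_or_ne (c i) 0 with hi | hi
    · simp [hF, hi]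
    · exact (integrableOn_exp_mul_rpowDivGammaDeriv (hδ.trans_le (ha i hi)) hs).const_mul _
  have hnorm (i : ι) : ∫ t in Set.Ioi (0 : ℝ), ‖F i t‖ ≤
      (|log s| + 2 / δ + 2) * |c i * s ^ (-a i)| := by
    rcases eq_or_ne (c i) 0 with hi | hi
    · simp [hF, hi]
    have hle := integral_norm_exp_mul_rpowDivGammaDeriv_le (hδ.trans_le (ha i hi)) hs
    calc ∫ t in Set.Ioi (0 : ℝ), ‖F i t‖
        = |c i| * ∫ t in Set.Ioi (0 : ℝ), ‖exp (-(s * t)) * rpowDivGammaDeriv (a i) t‖ := by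
          simp only [hF, norm_mul (c i), norm_eq_abs (c i), integral_const_mul]
      _ ≤ |c i| * ((|log s| + 2 / δ + 2) * s ^ (-a i)) := by
          have hai := ha i hi
          refine mul_le_mul_of_nonneg_left (hle.trans ?_) (abs_nonneg _)
          gcongr
      _ = (|log s| + 2 / δ + 2) * |c i * s ^ (-a i)| := by
          rw [abs_mul, abs_of_pos (rpow_pos_of_pos hs _)]
          ring
  have hsum : Summable fun i => ∫ t in Set.Ioi (0 : ℝ), ‖F i t‖ :=
    (hc.abs.mul_left _).of_nonneg_of_le (fun i => integral_nonneg fun t => norm_nonneg _) hnorm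
  have hvalue (i : ι) : ∫ t in Set.Ioi (0 : ℝ), F i t = -log s * (c i * s ^ (-a i)) := by
    rcases eq_or_ne (c i) 0 with hi | hi
    · simp [hF, hi]
    · rw [integral_const_mul, integral_exp_mul_rpowDivGammaDeriv (hδ.trans_le (ha i hi)) hs]
      ring
  calc ∫ t in Set.Ioi (0 : ℝ), exp (-(s * t)) * ∑' i, c i * rpowDivGammaDeriv (a i) t
      = ∫ t in Set.Ioi (0 : ℝ), ∑' i, F i t := by
        simp only [hF, ← tsum_mul_left, mul_left_comm]
    _ = ∑' i, ∫ t in Set.Ioi (0 : ℝ), F i t :=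
        (integral_tsum_of_summable_integral_norm hint hsum).symm
    _ = -(log s * ∑' i, c i * s ^ (-a i)) := by
        simp_rw [hvalue, tsum_mul_left, neg_mul]

end Laplace

section Multichoose

lemma succ_mul_multichoose_succ {R : Type*} [CommRing R] [BinomialRing R] (r : R) (k : ℕ) :
    (k + 1) * Ring.multichoose r (k + 1) = r * Ring.multichoose (r + 1) k := by
  have hleft := Ring.factorial_nsmul_multichoose_eq_ascPochhammer r (k + 1)
  rw [ascPochhammer_succ_left] at hleft
  have hright := Ring.factorial_nsmul_multichoose_eq_ascPochhammer (r + 1) k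
  have : IsAddTorsionFree R := BinomialRing.toIsAddTorsionFree
  refine nsmul_right_injective k.factorial_ne_zero ?_
  simp only [Nat.factorial_succ, nsmul_eq_mul, Nat.cast_mul, Nat.cast_add, Nat.cast_one,
    Polynomial.smeval_X_mul, Polynomial.smeval_comp, Polynomial.smeval_add, Polynomial.smeval_X,
    pow_one, Polynomial.smeval_one, pow_zero, one_smul, ← hright] at hleft ⊢
  linear_combination hleft

lemma Gamma_add_nat_div_eq_multichoose {g : ℝ} (hg : ∀ m : ℕ, g ≠ -m) (k : ℕ) :
    Gamma (g + k) / (Gamma g * k.factorial) = Ring.multichoose g k := by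
  have hratio : Gamma (g + k) / Gamma g = (ascPochhammer ℝ k).eval g := by
    have h := Complex.Gamma_add_nat_div_Gamma_eq (n := k) g (by exact_mod_cast hg)
    rw [← ascPochhammer_map Complex.ofRealHom, ← Complex.ofRealHom_eq_coe,
      Polynomial.eval_map_apply, Complex.ofRealHom_eq_coe, Complex.ofRealHom_eq_coe] at h
    rw [← Complex.ofReal_inj, ← h]
    simp [← Complex.Gamma_ofReal]
  rw [← div_div, hratio, ← Polynomial.ascPochhammer_smeval_eq_eval,
    ← Ring.factorial_nsmul_multichoose_eq_ascPochhammer, nsmul_eq_mul,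
    mul_div_cancel_left₀ _ (by positivity)]

lemma hasSum_multichoose_mul_pow (g : ℝ) {x : ℝ} (hx : |x| < 1) :
    HasSum (fun k => Ring.multichoose g k * x ^ k) (1 / (1 - x) ^ g) := by
  have h := (one_div_one_sub_rpow_hasFPowerSeriesOnBall_zero g).hasSum (y := x)
    (by simpa [enorm_eq_nnnorm, ← NNReal.coe_lt_coe] using hx)
  simpa [Ring.multichoose_eq, mul_comm, FormalMultilinearSeries.ofScalars_apply_eq] using h

lemma hasSum_multichoose_mul_natCast_mul_pow (g : ℝ) {x : ℝ} (hx : |x| < 1) :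
    HasSum (fun k : ℕ => Ring.multichoose g k * (k * x ^ k)) (g * x / (1 - x) ^ (g + 1)) := by
  rw [← hasSum_nat_add_iff' 1]
  convert! (hasSum_multichoose_mul_pow (g + 1) hx).mul_left (g * x) using 1
  · funext k
    push_cast
    linear_combination x ^ (k + 1) * succ_mul_multichoose_succ g k
  · simp [div_eq_mul_inv]

end Multichoose

section Prabhakar

variable {α β γ lam s : ℝ}

lemma natCast_mul_pow_mul_rpow_neg (hs : 0 < s) (m : ℝ) (k : ℕ) :
    m * (k * lam ^ k) * s ^ (-(α * k + β)) = s ^ (-β) * (m * (k * (lam / s ^ α) ^ k)) := by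
  rw [neg_add, rpow_add hs, rpow_neg hs.le, rpow_mul_natCast hs.le, div_pow]
  ring

lemma rpow_neg_mul_div_one_sub_div_rpow (hs : 0 < s) (hlam : lam < s ^ α) :
    s ^ (-β) * (γ * (lam / s ^ α) / (1 - lam / s ^ α) ^ (γ + 1)) =
      γ * lam * s ^ (α * γ - β) / (s ^ α - lam) ^ (γ + 1) := by
  have hsα : 0 < s ^ α := rpow_pos_of_pos hs α
  have hsub : 1 - lam / s ^ α = (s ^ α - lam) / s ^ α := by field_simp
  have hsplit : s ^ (α * γ - β) = s ^ (-β) * (s ^ α) ^ γ := by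
    rw [← rpow_mul hs.le, ← rpow_add hs, neg_add_eq_sub]
  rw [hsub, div_rpow (sub_pos.2 hlam).le hsα.le, rpow_add_one hsα.ne', hsplit]
  field_simp

lemma integral_exp_mul_tsum_multichoose_mul_rpowDivGammaDeriv (hα : 0 ≤ α) (hαβ : 0 < α + β)
    (hs : 0 < s) (hlam : |lam| < s ^ α) :
    ∫ t in Set.Ioi (0 : ℝ), exp (-(s * t)) * ∑' k : ℕ,
        Ring.multichoose γ k * (k * lam ^ k) * rpowDivGammaDeriv (α * k + β) t =
      -(γ * lam * s ^ (α * γ - β) * log s / (s ^ α - lam) ^ (γ + 1)) := by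
  have hratio : |lam / s ^ α| < 1 := by
    rwa [abs_div, abs_of_pos (rpow_pos_of_pos hs α), div_lt_one (rpow_pos_of_pos hs α)]
  have hseries : HasSum (fun k : ℕ =>
      Ring.multichoose γ k * (k * lam ^ k) * s ^ (-(α * k + β)))
      (γ * lam * s ^ (α * γ - β) / (s ^ α - lam) ^ (γ + 1)) := by
    rw [← rpow_neg_mul_div_one_sub_div_rpow hs (lt_of_abs_lt hlam)]
    simpa only [natCast_mul_pow_mul_rpow_neg hs] using
      (hasSum_multichoose_mul_natCast_mul_pow γ hratio).mul_left (s ^ (-β))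
  have hexponent (k : ℕ) (hk : Ring.multichoose γ k * (k * lam ^ k) ≠ 0) :
      α + β ≤ α * k + β := by
    have hk₀ : k ≠ 0 := by
      rintro rfl
      simp at hk
    have hk₁ : (1 : ℝ) ≤ k := by exact_mod_cast Nat.one_le_iff_ne_zero.2 hk₀
    gcongr
    exact le_mul_of_one_le_right hα hk₁
  rw [integral_exp_mul_tsum_rpowDivGammaDeriv hαβ hexponent hs hseries.summable, hseries.tsum_eq]
  ring

theorem laplace_deriv_alpha_Prabhakar_general (α β γ lam s : ℝ) (hα : 0 ≤ α) (hαβ : 0 < α + β)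
    (hγ : ∀ m : ℕ, γ ≠ -m) (hs : 0 < s) (hlam : |lam| < s ^ α) :
    (∫ t in Set.Ioi (0 : ℝ), Real.exp (-(s * t)) *
        ∑' k : ℕ, (Real.Gamma (γ + k) / (Real.Gamma γ * k.factorial)) *
          ((k : ℝ) * lam ^ k * t ^ (α * k + β - 1) *
            (Real.log t - digamma (α * k + β)) / Real.Gamma (α * k + β)))
      = -(γ * lam * s ^ (α * γ - β) * Real.log s / (s ^ α - lam) ^ (γ + 1)) := by
  rw [← integral_exp_mul_tsum_multichoose_mul_rpowDivGammaDeriv hα hαβ hs hlam]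
  simp only [Gamma_add_nat_div_eq_multichoose hγ, rpowDivGammaDeriv, mul_assoc, mul_div_assoc]

end Prabhakar

theorem laplace_deriv_alpha_Prabhakar (α β γ lam s : ℝ) (hα : 0 < α) (hβ : 0 < β)
    (hγ : 0 < γ) (hs : 0 < s) (hlam : |lam| < s ^ α) :
    (∫ t in Set.Ioi (0 : ℝ), Real.exp (-(s * t)) *
        ∑' k : ℕ, (Real.Gamma (γ + k) / (Real.Gamma γ * k.factorial)) *
          ((k : ℝ) * lam ^ k * t ^ (α * k + β - 1) *
            (Real.log t - digamma (α * k + β)) / Real.Gamma (α * k + β)))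
      = -(γ * lam * s ^ (α * γ - β) * Real.log s / (s ^ α - lam) ^ (γ + 1)) :=
  laplace_deriv_alpha_Prabhakar_general α β γ lam s hα.le (add_pos hα hβ)
    (ne_neg_natCast_of_pos hγ) hs hlam
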